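/- Let h be an invertible formal variable (work in M[h, h⁻¹] := M ⊗_k k[h,h⁻¹]). Define the formal deformed total symbol ς_{q_h}(Δ) := Σₖ h⁻ᵏ [Δ]ᵏ for Δ ∈ Diff. Then ς_{q_h} is a two-sided inverse of the formal deformed quantization q_h : Symb•[h,h⁻¹] → Diff[h,h⁻¹] defined by q_h(σ) = hⁿqⁿ(σ) for σ ∈ Symbⁿ; in particular, a ⋆ b = ς_{q_h}(q_h(a) ∘ q_h(b)) for all a, b ∈ Symb•[h,h⁻¹]. -/

import Mathlib

/-!
Statement 2 (Proposition 5.20(iii)): with an increasing filtration `Diffⁿ(E,F)` of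
k-submodules of `Hom_k(E,F)`, symbol quotients `Symbⁿ = Diffⁿ/Diffⁿ⁻¹` with projections `ζⁿ`,
and k-linear sections `qⁿ` of `ζⁿ`, the k-truncation `⌊Δ⌋ᵏ` of any `Δ ∈ Diffⁿ`
lies in `Diffᵏ` for every `k`.
-/

open Submodule
open scoped Classical DirectSum

variable {R : Type*} [CommRing R]

/-- `Diff⁻¹ := 0`; `Dprev D n` is `Diffⁿ⁻¹`. -/
def Dprev {M : Type*} [AddCommGroup M] [Module R M] (D : ℕ → Submodule R M) :
    ℕ → Submodule R M
  | 0 => ⊥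
  | n + 1 => D n

/-- `Diffⁿ⁻¹` viewed as a submodule of `Diffⁿ`. -/
def Nsub {M : Type*} [AddCommGroup M] [Module R M] (D : ℕ → Submodule R M) (n : ℕ) :
    Submodule R (D n) := (Dprev D n).comap (D n).subtype

/-- The symbol module `Symbⁿ := Diffⁿ/Diffⁿ⁻¹`; the symbol map `ζⁿ` is the quotient
projection `Submodule.Quotient.mk`. -/
abbrev Symb {M : Type*} [AddCommGroup M] [Module R M] (D : ℕ → Submodule R M) (n : ℕ) :=
  D n ⧸ Nsub D n

/-- The k-truncation `⌊Δ⌋ᵏ` of `Δ` regarded as a differential operator of order at most `n`: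
`⌊Δ⌋ᵏ = Δ` for `k ≥ n` and `⌊Δ⌋ᵏ = ⌊Δ⌋ᵏ⁺¹ − qᵏ⁺¹(ζᵏ⁺¹(⌊Δ⌋ᵏ⁺¹))` for `k < n`
(the inner `dite` is always taken in its first branch, by Proposition 5.20(iii)). -/
noncomputable def trunc {M : Type*} [AddCommGroup M] [Module R M] (D : ℕ → Submodule R M)
    (q : (n : ℕ) → Symb D n →ₗ[R] D n) (n : ℕ) (Δ : M) (k : ℕ) : M :=
  if n ≤ k then Δ
  else
    let t := trunc D q n Δ (k + 1)
    if h : t ∈ D (k + 1) then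
      t - ((q (k + 1) (Submodule.Quotient.mk ⟨t, h⟩) : D (k + 1)) : M)
    else t
  termination_by n - k
  decreasing_by omega

/-- The truncated symbol `[Δ]ᵏ := ζᵏ(⌊Δ⌋ᵏ) ∈ Symbᵏ` (where `Δ` is regarded as an operator
of order at most `n`); the `dite` is always taken in its first branch by Proposition 5.20(iii). -/
noncomputable def symbTrunc {M : Type*} [AddCommGroup M] [Module R M] (D : ℕ → Submodule R M)
    (q : (n : ℕ) → Symb D n →ₗ[R] D n) (n : ℕ) (Δ : M) (k : ℕ) : Symb D k :=
  if h : trunc D q n Δ k ∈ D k then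
    (Submodule.Quotient.mk (⟨trunc D q n Δ k, h⟩ : D k) : Symb D k)
  else 0


variable {A : Type*} [Ring A] [Algebra R A]

/-- The formal h-deformed quantization `q_h : Symb•[h] → Diff[h]`, modelling `M[h] = M ⊗ k[h]`
as `ℕ →₀ M` (the coefficient of `hⁱ` sitting in degree `i`):
`q_h(hⁱ σ) = hⁱ⁺ⁿ qⁿ(σ)` for `σ ∈ Symbⁿ`, extended k[h]-linearly. -/
noncomputable def qhF (D : ℕ → Submodule R A) (q : (n : ℕ) → Symb D n →ₗ[R] D n)
    (f : ℕ →₀ (⨁ n, Symb D n)) : ℕ →₀ A :=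
  f.sum fun i x => x.sum fun n σ => Finsupp.single (i + n) ((q n σ : A))

/-- The convolution product on `Diff[h] = ℕ →₀ Diff`: the k[h]-bilinear extension of the
composition (multiplication) of differential operators. -/
noncomputable def convMul (f g : ℕ →₀ A) : ℕ →₀ A :=
  f.sum fun i a => g.sum fun j b => Finsupp.single (i + j) (a * b)

/-- `M[h,h⁻¹] = M ⊗ k[h,h⁻¹]` is modelled as `ℤ →₀ M` (finite Laurent series).
The formal deformed quantization `q_h : Symb•[h,h⁻¹] → Diff[h,h⁻¹]`,
`q_h(hⁱσ) = hⁱ⁺ⁿ qⁿ(σ)` for `σ ∈ Symbⁿ`, extended k[h,h⁻¹]-linearly. -/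
noncomputable def qhLF (D : ℕ → Submodule R A) (q : (n : ℕ) → Symb D n →ₗ[R] D n)
    (f : ℤ →₀ (⨁ n, Symb D n)) : ℤ →₀ A :=
  f.sum fun i x => x.sum fun n σ => Finsupp.single (i + (n : ℤ)) ((q n σ : A))

/-- Convolution product on `Diff[h,h⁻¹] = ℤ →₀ Diff`: the k[h,h⁻¹]-bilinear extension of
composition of differential operators. -/
noncomputable def convMulZ (f g : ℤ →₀ A) : ℤ →₀ A :=
  f.sum fun i a => g.sum fun j b => Finsupp.single (i + j) (a * b)

/-- The order of `a ∈ Diff = ⋃ₙ Diffⁿ` (the least `n` with `a ∈ Diffⁿ`). -/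
noncomputable def ordOf (D : ℕ → Submodule R A) (a : A) : ℕ :=
  if h : ∃ n, a ∈ D n then Nat.find h else 0

/-- The formal deformed total symbol `ς_{q_h}(hⁱ Δ) := Σₖ hⁱ⁻ᵏ [Δ]ᵏ`,
extended k[h,h⁻¹]-linearly. -/
noncomputable def sLF (D : ℕ → Submodule R A) (q : (n : ℕ) → Symb D n →ₗ[R] D n)
    (f : ℤ →₀ A) : ℤ →₀ (⨁ n, Symb D n) :=
  f.sum fun i a => (Finset.range (ordOf D a + 1)).sum fun k =>
    Finsupp.single (i - (k : ℤ))
      (DirectSum.of (fun j => Symb D j) k (symbTrunc D q (ordOf D a) a k))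

/-- The formal star product on `Symb•[h,h⁻¹]`. -/
noncomputable def starLF (D : ℕ → Submodule R A) (q : (n : ℕ) → Symb D n →ₗ[R] D n)
    (x y : ℤ →₀ (⨁ n, Symb D n)) : ℤ →₀ (⨁ n, Symb D n) :=
  x.sum fun i a => y.sum fun i' b =>
    a.sum fun n σ => b.sum fun m τ =>
      (Finset.range (n + m + 1)).sum fun k =>
        Finsupp.single (i + i' + (k : ℤ))
          (DirectSum.of (fun j => Symb D j) (n + m - k)
            (symbTrunc D q (n + m) ((q n σ : A) * (q m τ : A)) (n + m - k)))

section Truncation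

variable {D : ℕ → Submodule R A} {q : (n : ℕ) → Symb D n →ₗ[R] D n}

theorem sub_quantize_mem_Dprev (hq : ∀ (n : ℕ) (σ : Symb D n), Submodule.Quotient.mk (q n σ) = σ)
    {n : ℕ} (a : D n) :
    (a : A) - (q n (Submodule.Quotient.mk a) : D n) ∈ Dprev D n := by
  have h : a - q n (Submodule.Quotient.mk a) ∈ Nsub D n :=
    (Submodule.Quotient.eq _).1 (hq n _).symm
  exact h

theorem trunc_of_le {n k : ℕ} (h : n ≤ k) (a : A) : trunc D q n a k = a := by
  rw [trunc, if_pos h]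

theorem trunc_of_lt {n k : ℕ} (hk : k < n) (a : A) (h : trunc D q n a (k + 1) ∈ D (k + 1)) :
    trunc D q n a k = trunc D q n a (k + 1) -
      (q (k + 1) (Submodule.Quotient.mk ⟨trunc D q n a (k + 1), h⟩) : D (k + 1)) := by
  rw [trunc, if_neg (by omega)]
  simp only [dif_pos h]

theorem trunc_mem (hq : ∀ (n : ℕ) (σ : Symb D n), Submodule.Quotient.mk (q n σ) = σ)
    {n : ℕ} {a : A} (ha : a ∈ D n) {k : ℕ} (hk : k ≤ n) : trunc D q n a k ∈ D k := by
  induction hk using Nat.decreasingInduction with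
  | self => rwa [trunc_of_le le_rfl]
  | of_succ k hk ih =>
    rw [trunc_of_lt hk a ih]
    exact sub_quantize_mem_Dprev hq ⟨trunc D q n a (k + 1), ih⟩

theorem sum_quantize_symbTrunc
    (hq : ∀ (n : ℕ) (σ : Symb D n), Submodule.Quotient.mk (q n σ) = σ)
    {n : ℕ} {a : A} (ha : a ∈ D n) {m : ℕ} (hm : m ≤ n) :
    ∑ k ∈ Finset.range (m + 1), (q k (symbTrunc D q n a k) : A) = trunc D q n a m := by
  induction m with
  | zero =>
    have h := trunc_mem hq ha hm
    have h0 := sub_quantize_mem_Dprev hq ⟨_, h⟩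
    simp only [Dprev, Submodule.mem_bot] at h0
    simp only [zero_add, Finset.sum_range_one, symbTrunc, dif_pos h]
    exact (sub_eq_zero.1 h0).symm
  | succ m ih =>
    have h := trunc_mem hq ha hm
    rw [Finset.sum_range_succ, ih (by omega), trunc_of_lt (by omega) a h]
    simp only [symbTrunc, dif_pos h, sub_add_cancel]

theorem eq_zero_of_sum_quantize_eq_zero (hmono : Monotone D)
    (hq : ∀ (n : ℕ) (σ : Symb D n), Submodule.Quotient.mk (q n σ) = σ)
    (c : ∀ k, Symb D k) (N : ℕ) (h : ∑ k ∈ Finset.range N, (q k (c k) : A) = 0) :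
    ∀ k < N, c k = 0 := by
  induction N with
  | zero => simp
  | succ N ih =>
    rw [Finset.sum_range_succ] at h
    have hprev : ∑ k ∈ Finset.range N, (q k (c k) : A) ∈ Dprev D N := by
      cases N with
      | zero => simp
      | succ N =>
        exact Submodule.sum_mem _ fun k hk =>
          hmono (Nat.lt_succ_iff.1 (Finset.mem_range.1 hk)) (q k (c k)).2
    have hN : c N = 0 := by
      rw [← hq N (c N), Submodule.Quotient.mk_eq_zero]
      change (q N (c N) : A) ∈ Dprev D N
      rw [eq_neg_of_add_eq_zero_right h]
      exact Submodule.neg_mem _ hprev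
    rw [hN, map_zero, ZeroMemClass.coe_zero, add_zero] at h
    intro k hk
    rcases Nat.lt_succ_iff_lt_or_eq.1 hk with hk | rfl
    exacts [ih h k hk, hN]

end Truncation

section TotalSymbol

variable (D : ℕ → Submodule R A) (q : (n : ℕ) → Symb D n →ₗ[R] D n)

/-- The total quantization `Symb• → Diff`, `σ ↦ qⁿ(σ)` for `σ ∈ Symbⁿ`. -/
noncomputable def totalQuant : (⨁ n, Symb D n) →+ A :=
  DirectSum.toAddMonoid fun n => ((D n).subtype ∘ₗ q n).toAddMonoidHom

@[simp]
theorem totalQuant_of (n : ℕ) (σ : Symb D n) :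
    totalQuant D q (DirectSum.of (fun j => Symb D j) n σ) = (q n σ : A) := by
  simp [totalQuant]

/-- The total symbol `Σₖ [a]ᵏ` of `a` regarded as an operator of order at most `n`. -/
noncomputable def totalSymb (n : ℕ) (a : A) : ⨁ n, Symb D n :=
  ∑ k ∈ Finset.range (n + 1), DirectSum.of (fun j => Symb D j) k (symbTrunc D q n a k)

variable {D q}

theorem totalQuant_totalSymb
    (hq : ∀ (n : ℕ) (σ : Symb D n), Submodule.Quotient.mk (q n σ) = σ)
    {n : ℕ} {a : A} (ha : a ∈ D n) : totalQuant D q (totalSymb D q n a) = a := by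
  simp only [totalSymb, map_sum, totalQuant_of]
  rw [sum_quantize_symbTrunc hq ha le_rfl, trunc_of_le le_rfl]

theorem sum_range_of {x : ⨁ n, Symb D n} {N : ℕ} (hN : DFinsupp.support x ⊆ Finset.range N) :
    ∑ k ∈ Finset.range N, DirectSum.of (fun j => Symb D j) k (x k) = x := by
  conv_rhs => rw [← DirectSum.sum_support_of x]
  refine (Finset.sum_subset hN fun k _ hk => ?_).symm
  rw [DFinsupp.notMem_support_iff.1 hk, map_zero]

theorem totalQuant_injective (hmono : Monotone D)
    (hq : ∀ (n : ℕ) (σ : Symb D n), Submodule.Quotient.mk (q n σ) = σ) :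
    Function.Injective (totalQuant D q) := by
  intro x y hxy
  obtain ⟨N, hN⟩ := Finset.exists_nat_subset_range (DFinsupp.support x ∪ DFinsupp.support y)
  rw [← sum_range_of (Finset.subset_union_left.trans hN),
    ← sum_range_of (Finset.subset_union_right.trans hN)] at hxy ⊢
  have h0 := eq_zero_of_sum_quantize_eq_zero hmono hq (fun k => x k - y k) N (by
    simpa only [map_sum, totalQuant_of, map_sub, AddSubgroupClass.coe_sub,
      Finset.sum_sub_distrib, sub_eq_zero] using hxy)
  exact Finset.sum_congr rfl fun k hk => by rw [sub_eq_zero.1 (h0 k (Finset.mem_range.1 hk))]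

theorem ordOf_spec (hexh : ∀ a : A, ∃ n, a ∈ D n) (a : A) : a ∈ D (ordOf D a) := by
  rw [ordOf, dif_pos (hexh a)]
  exact Nat.find_spec (hexh a)

/-- The total quantization is an isomorphism, inverted by the total symbol. -/
noncomputable def totalQuantEquiv (hmono : Monotone D) (hexh : ∀ a : A, ∃ n, a ∈ D n)
    (hq : ∀ (n : ℕ) (σ : Symb D n), Submodule.Quotient.mk (q n σ) = σ) :
    (⨁ n, Symb D n) ≃+ A :=
  AddEquiv.ofBijective (totalQuant D q) ⟨totalQuant_injective hmono hq,
    fun a => ⟨_, totalQuant_totalSymb hq (ordOf_spec hexh a)⟩⟩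

theorem totalQuantEquiv_apply (hmono : Monotone D) (hexh : ∀ a : A, ∃ n, a ∈ D n)
    (hq : ∀ (n : ℕ) (σ : Symb D n), Submodule.Quotient.mk (q n σ) = σ) (x : ⨁ n, Symb D n) :
    totalQuantEquiv hmono hexh hq x = totalQuant D q x := rfl

theorem totalQuantEquiv_symm_apply (hmono : Monotone D) (hexh : ∀ a : A, ∃ n, a ∈ D n)
    (hq : ∀ (n : ℕ) (σ : Symb D n), Submodule.Quotient.mk (q n σ) = σ)
    {n : ℕ} {a : A} (ha : a ∈ D n) :
    (totalQuantEquiv hmono hexh hq).symm a = totalSymb D q n a :=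
  (AddEquiv.symm_apply_eq _).2 (totalQuant_totalSymb hq ha).symm

end TotalSymbol

section Laurent

variable (D : ℕ → Submodule R A) (q : (n : ℕ) → Symb D n →ₗ[R] D n)

/-- The additive map `σ ↦ hⁱ⁻ⁿ σ` for `σ ∈ Symbⁿ`. -/
noncomputable def spread (i : ℤ) : (⨁ n, Symb D n) →+ (ℤ →₀ ⨁ n, Symb D n) :=
  DirectSum.toAddMonoid fun n =>
    (Finsupp.singleAddHom (i - (n : ℤ))).comp (DirectSum.of (fun j => Symb D j) n)

@[simp]
theorem spread_of (i : ℤ) (n : ℕ) (σ : Symb D n) :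
    spread D i (DirectSum.of (fun j => Symb D j) n σ) =
      Finsupp.single (i - (n : ℤ)) (DirectSum.of (fun j => Symb D j) n σ) := by
  simp [spread]

/-- The additive map `σ ↦ hⁱ⁺ⁿ qⁿ(σ)` for `σ ∈ Symbⁿ`. -/
noncomputable def quantAt (i : ℤ) : (⨁ n, Symb D n) →+ (ℤ →₀ A) :=
  DirectSum.toAddMonoid fun n =>
    (Finsupp.singleAddHom (i + (n : ℤ))).comp ((D n).subtype ∘ₗ q n).toAddMonoidHom

@[simp]
theorem quantAt_of (i : ℤ) (n : ℕ) (σ : Symb D n) :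
    quantAt D q i (DirectSum.of (fun j => Symb D j) n σ) =
      Finsupp.single (i + (n : ℤ)) (q n σ : A) := by
  simp [quantAt]

theorem quantAt_apply (i : ℤ) (x : ⨁ n, Symb D n) :
    quantAt D q i x = x.sum fun n σ => Finsupp.single (i + (n : ℤ)) (q n σ : A) := by
  conv_lhs => rw [← DirectSum.sum_support_of x]
  simp only [map_sum, quantAt_of]
  rfl

/-- `qhLF` as an additive map. -/
noncomputable def qhHom : (ℤ →₀ ⨁ n, Symb D n) →+ (ℤ →₀ A) :=
  Finsupp.liftAddHom (quantAt D q)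

theorem qhHom_apply (f : ℤ →₀ ⨁ n, Symb D n) : qhHom D q f = qhLF D q f := by
  rw [qhHom, Finsupp.liftAddHom_apply, qhLF]
  exact Finsupp.sum_congr fun i _ => quantAt_apply D q i (f i)

theorem qhHom_spread (i : ℤ) (x : ⨁ n, Symb D n) :
    qhHom D q (spread D i x) = Finsupp.single i (totalQuant D q x) := by
  suffices h : (qhHom D q).comp (spread D i) =
      (Finsupp.singleAddHom i).comp (totalQuant D q) from DFunLike.congr_fun h x
  ext n σ : 2
  simp [qhHom]

/-- `convMulZ` as a biadditive map. -/
noncomputable def convHom : (ℤ →₀ A) →+ (ℤ →₀ A) →+ (ℤ →₀ A) :=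
  Finsupp.liftAddHom fun i => AddMonoidHom.flip <| Finsupp.liftAddHom fun j =>
    AddMonoidHom.flip <| (AddMonoidHom.compHom (Finsupp.singleAddHom (i + j))).comp AddMonoidHom.mul

theorem convHom_apply (f g : ℤ →₀ A) : convHom f g = convMulZ f g := by
  simp only [convHom, convMulZ, Finsupp.liftAddHom_apply, Finsupp.sum, AddMonoidHom.finsetSum_apply,
    AddMonoidHom.flip_apply]
  rfl

theorem convHom_single (i j : ℤ) (a b : A) :
    convHom (Finsupp.single i a) (Finsupp.single j b) = Finsupp.single (i + j) (a * b) := by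
  simp [convHom]

variable {D q} (hmono : Monotone D) (hexh : ∀ a : A, ∃ n, a ∈ D n)
  (hq : ∀ (n : ℕ) (σ : Symb D n), Submodule.Quotient.mk (q n σ) = σ)

/-- `sLF` as an additive map. -/
noncomputable def sHom : (ℤ →₀ A) →+ (ℤ →₀ ⨁ n, Symb D n) :=
  Finsupp.liftAddHom fun i =>
    (spread D i).comp (totalQuantEquiv hmono hexh hq).symm.toAddMonoidHom

theorem sHom_single (i : ℤ) (a : A) :
    sHom hmono hexh hq (Finsupp.single i a) =
      spread D i ((totalQuantEquiv hmono hexh hq).symm a) := by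
  simp [sHom]

theorem sHom_apply (f : ℤ →₀ A) : sHom hmono hexh hq f = sLF D q f := by
  simp only [sHom, sLF, Finsupp.liftAddHom_apply]
  refine Finsupp.sum_congr fun i _ => ?_
  change spread D i ((totalQuantEquiv hmono hexh hq).symm (f i)) = _
  rw [totalQuantEquiv_symm_apply hmono hexh hq (ordOf_spec hexh (f i))]
  simp only [totalSymb, map_sum, spread_of]

theorem sHom_qhHom (f : ℤ →₀ ⨁ n, Symb D n) : sHom hmono hexh hq (qhHom D q f) = f := by
  suffices h : (sHom hmono hexh hq).comp (qhHom D q) = AddMonoidHom.id _ from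
    DFunLike.congr_fun h f
  ext i n σ : 3
  have h : (totalQuantEquiv hmono hexh hq).symm (q n σ : A) =
      DirectSum.of (fun j => Symb D j) n σ :=
    (AddEquiv.symm_apply_eq _).2 (totalQuant_of D q n σ).symm
  simp [qhHom, sHom_single, h]

theorem qhHom_sHom (f : ℤ →₀ A) : qhHom D q (sHom hmono hexh hq f) = f := by
  suffices h : (qhHom D q).comp (sHom hmono hexh hq) = AddMonoidHom.id _ from
    DFunLike.congr_fun h f
  ext i a : 2
  simp [sHom_single, qhHom_spread, ← totalQuantEquiv_apply hmono hexh hq]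

theorem sHom_single_of_mem (i : ℤ) {n : ℕ} {a : A} (ha : a ∈ D n) :
    sHom hmono hexh hq (Finsupp.single (i + (n : ℤ)) a) =
      ∑ k ∈ Finset.range (n + 1), Finsupp.single (i + (k : ℤ))
        (DirectSum.of (fun j => Symb D j) (n - k) (symbTrunc D q n a (n - k))) := by
  rw [sHom_single, totalQuantEquiv_symm_apply hmono hexh hq ha, totalSymb, map_sum,
    ← Finset.sum_range_reflect]
  refine Finset.sum_congr rfl fun k hk => ?_
  have hk' : k ≤ n := Nat.lt_succ_iff.1 (Finset.mem_range.1 hk)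
  rw [show n + 1 - 1 - k = n - k by omega, spread_of]
  congr 1
  push_cast [hk']
  ring

theorem starLF_eq (hmul : ∀ ⦃n m : ℕ⦄ ⦃x y : A⦄, x ∈ D n → y ∈ D m → x * y ∈ D (n + m))
    (x y : ℤ →₀ ⨁ n, Symb D n) :
    starLF D q x y = sHom hmono hexh hq (convHom (qhHom D q x) (qhHom D q y)) := by
  have hx : convHom (qhHom D q x) (qhHom D q y) =
      x.sum fun i a => y.sum fun j b => convHom (quantAt D q i a) (quantAt D q j b) := by
    simp only [qhHom, Finsupp.liftAddHom_apply, Finsupp.sum, map_sum,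
      AddMonoidHom.finsetSum_apply]
    exact Finset.sum_comm
  rw [hx]
  simp only [starLF, Finsupp.sum, map_sum]
  refine Finset.sum_congr rfl fun i _ => Finset.sum_congr rfl fun j _ => ?_
  simp only [quantAt_apply, DFinsupp.sum, map_sum, AddMonoidHom.finsetSum_apply]
  rw [Finset.sum_comm]
  refine Finset.sum_congr rfl fun m _ => Finset.sum_congr rfl fun n _ => ?_
  rw [convHom_single, ← sHom_single_of_mem hmono hexh hq _ (hmul (q _ _).2 (q _ _).2)]
  congr 2
  push_cast
  ring

end Laurent

/-!
Statement 12 (Proposition 5.45): with `h` an invertible formal variable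
(working in `M[h,h⁻¹]`), the formal deformed total symbol `ς_{q_h}(Δ) = Σₖ h⁻ᵏ[Δ]ᵏ` is a
two-sided inverse of the formal deformed quantization
`q_h : Symb•[h,h⁻¹] → Diff[h,h⁻¹]`, `q_h(σ) = hⁿqⁿ(σ)` for `σ ∈ Symbⁿ`; in particular
`a ⋆ b = ς_{q_h}(q_h(a) ∘ q_h(b))` for all `a, b ∈ Symb•[h,h⁻¹]`.
-/
theorem statement_12 (D : ℕ → Submodule R A) (hmono : Monotone D)
    (hexh : ∀ a : A, ∃ n, a ∈ D n)
    (hone : (1 : A) ∈ D 0)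
    (hmul : ∀ ⦃n m : ℕ⦄ ⦃x y : A⦄, x ∈ D n → y ∈ D m → x * y ∈ D (n + m))
    (q : (n : ℕ) → Symb D n →ₗ[R] D n)
    (hq : ∀ (n : ℕ) (σ : Symb D n), (Submodule.Quotient.mk (q n σ) : Symb D n) = σ) :
    (∀ f : ℤ →₀ (⨁ n, Symb D n), sLF D q (qhLF D q f) = f) ∧
    (∀ f : ℤ →₀ A, qhLF D q (sLF D q f) = f) ∧
    (∀ x y : ℤ →₀ (⨁ n, Symb D n),
        starLF D q x y = sLF D q (convMulZ (qhLF D q x) (qhLF D q y))) := by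
  refine ⟨fun f => ?_, fun f => ?_, fun x y => ?_⟩
  · rw [← qhHom_apply, ← sHom_apply hmono hexh hq, sHom_qhHom]
  · rw [← sHom_apply hmono hexh hq, ← qhHom_apply, qhHom_sHom]
  · rw [starLF_eq hmono hexh hq hmul, ← qhHom_apply, ← qhHom_apply, ← convHom_apply,
      ← sHom_apply hmono hexh hq]
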